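/- Let G be a word hyperbolic group generated by a finite set 𝒢 closed under inversion, and let C₁ be a virtually cyclic subgroup of G with a finite generating set 𝒞₁ ⊆ 𝒢 closed under inversion. Then there is a constant λ > 0 such that whenever U is a d_𝒢-geodesic word whose value Ū is of minimal l_𝒢-length in the coset Ū·C₁, and V is a d_{𝒞₁}-geodesic word over 𝒞₁, the concatenation UV is λ-quasigeodesic with respect to d_𝒢. -/

import Mathlib

universe u v w

section Defs

variable {G : Type u} [Group G]

/-- A finite generating set closed under inversion. -/
def IsSymmGen (X : Set G) : Prop :=
  X.Finite ∧ (∀ x ∈ X, x⁻¹ ∈ X) ∧ Subgroup.closure X = ⊤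

/-- Word length of `g` with respect to `X`. -/
noncomputable def wordLength (X : Set G) (g : G) : ℕ :=
  sInf {n : ℕ | ∃ l : List G, l.length = n ∧ (∀ x ∈ l, x ∈ X) ∧ l.prod = g}

/-- Word metric. -/
noncomputable def wordDist (X : Set G) (g h : G) : ℕ :=
  wordLength X (g⁻¹ * h)

/-- Gromov product with respect to the word metric. -/
noncomputable def gromovProd (X : Set G) (x y w : G) : ℝ :=
  ((wordDist X x w : ℝ) + (wordDist X y w : ℝ) - (wordDist X x y : ℝ)) / 2

end Defs

/-- A group is word hyperbolic if for some finite symmetric generating set the Gromov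
product satisfies the hyperbolicity inequality. -/
def IsWordHyperbolic (G : Type u) [Group G] : Prop :=
  ∃ X : Set G, IsSymmGen X ∧ ∃ δ : ℝ, 0 ≤ δ ∧
    ∀ x y z w : G,
      gromovProd X x z w ≥ min (gromovProd X x y w) (gromovProd X y z w) - δ

/-- A subgroup is quasiconvex: it is finitely generated and word lengths distort linearly. -/
def IsQuasiconvex {G : Type u} [Group G] (A : Subgroup G) : Prop :=
  ∃ Y : Set ↥A, IsSymmGen Y ∧ ∃ X : Set G, IsSymmGen X ∧ ∃ c : ℝ, 0 < c ∧
    ∀ a : ↥A, (wordLength Y a : ℝ) ≤ c * (wordLength X (a : G) : ℝ) + c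

/-- Property (Q): every finitely generated subgroup is quasiconvex. -/
def HasPropertyQ (G : Type u) [Group G] : Prop :=
  ∀ H : Subgroup G, H.FG → IsQuasiconvex H

/-- A group is virtually cyclic if it has a cyclic subgroup of finite index. -/
def IsVirtuallyCyclic (C : Type u) [Group C] : Prop :=
  ∃ Z : Subgroup C, IsCyclic ↥Z ∧ Z.FiniteIndex

/-- `G` is the amalgamated free product of its subgroups `A` and `B` along `C`:
`C = A ⊓ B`, `A ⊔ B = ⊤` and `G` has the pushout universal property. -/
structure IsAmalgamatedFreeProduct {G : Type u} [Group G] (A B C : Subgroup G) : Prop where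
  le_left : C ≤ A
  le_right : C ≤ B
  inf_eq : A ⊓ B = C
  sup_eq_top : A ⊔ B = ⊤
  univ : ∀ (K : Type u) [Group K] (f : ↥A →* K) (g : ↥B →* K),
    (∀ (c : G) (hA : c ∈ A) (hB : c ∈ B), f ⟨c, hA⟩ = g ⟨c, hB⟩) →
    ∃ h : G →* K, (∀ a : ↥A, h a = f a) ∧ (∀ b : ↥B, h b = g b)

section Words

variable {G : Type u} [Group G]

/-- A word over the alphabet `X`. -/
def IsWordOver (X : Set G) (l : List G) : Prop := ∀ x ∈ l, x ∈ X

/-- A geodesic word over `X`. -/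
def IsGeodesicWord (X : Set G) (l : List G) : Prop :=
  IsWordOver X l ∧ l.length = wordLength X l.prod

/-- A `lam`-quasigeodesic word over `X`: every subword `v` satisfies
`l(v) ≤ lam * l_X(v̄) + lam`. -/
def IsQuasigeodesicWord (X : Set G) (lam : ℝ) (l : List G) : Prop :=
  IsWordOver X l ∧
    ∀ v : List G, v <:+: l → (v.length : ℝ) ≤ lam * (wordLength X v.prod : ℝ) + lam

/-- `g` is a shortest element of the subset `S` with respect to `wordLength X`. -/
def ShortestIn (X : Set G) (g : G) (S : Set G) : Prop :=
  g ∈ S ∧ ∀ s ∈ S, wordLength X g ≤ wordLength X s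

end Words

/-- `G` together with `ια, ιβ` is the pushout of `ℤ → A, 1 ↦ x` and `ℤ → B, 1 ↦ y`. -/
structure IsAmalgamOverZ {A : Type u} {B : Type v} {G : Type w}
    [Group A] [Group B] [Group G]
    (ια : A →* G) (ιβ : B →* G) (x : A) (y : B) : Prop where
  comm : ια x = ιβ y
  gen : ια.range ⊔ ιβ.range = ⊤
  univ : ∀ (K : Type (max u v w)) [Group K] (f : A →* K) (g : B →* K),
    f x = g y → ∃ h : G →* K, h.comp ια = f ∧ h.comp ιβ = g

section WordLength

variable {G : Type u} [Group G] {X : Set G}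

theorem IsSymmGen.mem_closure (hX : IsSymmGen X) (g : G) : g ∈ Subgroup.closure X :=
  hX.2.2 ▸ Subgroup.mem_top g

theorem wordLength_prod_le {l : List G} (hl : ∀ x ∈ l, x ∈ X) :
    wordLength X l.prod ≤ l.length :=
  Nat.sInf_le ⟨l, rfl, hl, rfl⟩

theorem wordLength_one : wordLength X (1 : G) = 0 :=
  Nat.le_zero.mp (wordLength_prod_le (l := []) (by simp))

theorem exists_geodesicWord (hinv : ∀ x ∈ X, x⁻¹ ∈ X) {g : G}
    (hg : g ∈ Subgroup.closure X) :
    ∃ l : List G, l.length = wordLength X g ∧ (∀ x ∈ l, x ∈ X) ∧ l.prod = g := by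
  rw [← Subgroup.mem_toSubmonoid, Subgroup.closure_toSubmonoid] at hg
  obtain ⟨l, hl, hprod⟩ := Submonoid.exists_list_of_mem_closure hg
  refine Nat.sInf_mem (s := {n : ℕ | ∃ l : List G, l.length = n ∧ (∀ x ∈ l, x ∈ X) ∧
    l.prod = g}) ⟨l.length, l, rfl, fun x hx => ?_, hprod⟩
  rcases hl x hx with h | h
  · exact h
  · simpa using hinv _ h

theorem wordLength_mul_le (hinv : ∀ x ∈ X, x⁻¹ ∈ X) {g h : G}
    (hg : g ∈ Subgroup.closure X) (hh : h ∈ Subgroup.closure X) :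
    wordLength X (g * h) ≤ wordLength X g + wordLength X h := by
  obtain ⟨l, hl, hlX, rfl⟩ := exists_geodesicWord hinv hg
  obtain ⟨l', hl', hlX', rfl⟩ := exists_geodesicWord hinv hh
  rw [← hl, ← hl', ← List.prod_append, ← List.length_append]
  refine wordLength_prod_le fun x hx => ?_
  rcases List.mem_append.mp hx with h | h
  · exact hlX x h
  · exact hlX' x h

theorem wordLength_inv_le (hinv : ∀ x ∈ X, x⁻¹ ∈ X) {g : G}
    (hg : g ∈ Subgroup.closure X) : wordLength X g⁻¹ ≤ wordLength X g := by
  obtain ⟨l, hl, hlX, rfl⟩ := exists_geodesicWord hinv hg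
  rw [← hl, List.prod_inv_reverse]
  refine (wordLength_prod_le fun x hx => ?_).trans (by simp)
  obtain ⟨y, hy, rfl⟩ := List.mem_map.mp (List.mem_reverse.mp hx)
  exact hinv y (hlX y hy)

theorem wordLength_inv (hinv : ∀ x ∈ X, x⁻¹ ∈ X) {g : G}
    (hg : g ∈ Subgroup.closure X) : wordLength X g⁻¹ = wordLength X g := by
  refine (wordLength_inv_le hinv hg).antisymm ?_
  simpa using wordLength_inv_le hinv (inv_mem hg)

theorem wordLength_zpow_le (hinv : ∀ x ∈ X, x⁻¹ ∈ X) {g : G}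
    (hg : g ∈ Subgroup.closure X) (n : ℤ) :
    wordLength X (g ^ n) ≤ n.natAbs * wordLength X g := by
  have key : ∀ k : ℕ, wordLength X (g ^ k) ≤ k * wordLength X g := by
    intro k
    induction k with
    | zero => simp [wordLength_one]
    | succ k ih =>
      rw [pow_succ]
      have := wordLength_mul_le hinv (pow_mem hg k) hg
      linarith
  obtain ⟨k, rfl | rfl⟩ := n.eq_nat_or_neg
  · simpa using key k
  · rw [zpow_neg, zpow_natCast, wordLength_inv hinv (pow_mem hg _)]
    simpa using key k

/-- Word lengths with respect to two generating sets are comparable. -/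
theorem exists_wordLength_le_mul {X' : Set G} (hX : IsSymmGen X) (hX' : IsSymmGen X') :
    ∃ K : ℕ, ∀ g : G, wordLength X' g ≤ K * wordLength X g := by
  obtain ⟨K, hK⟩ := (hX.1.image (wordLength X')).bddAbove
  have key : ∀ l : List G, (∀ x ∈ l, x ∈ X) → wordLength X' l.prod ≤ K * l.length := by
    intro l
    induction l with
    | nil => simp [wordLength_one]
    | cons a l ih =>
      intro hl
      have h1 := ih fun x hx => hl x (List.mem_cons_of_mem _ hx)
      have h2 : wordLength X' a ≤ K := hK ⟨a, hl a List.mem_cons_self, rfl⟩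
      have h3 := wordLength_mul_le hX'.2.1 (hX'.mem_closure a) (hX'.mem_closure l.prod)
      simp only [List.prod_cons, List.length_cons]
      linarith
  refine ⟨K, fun g => ?_⟩
  obtain ⟨l, hl, hlX, rfl⟩ := exists_geodesicWord hX.2.1 (hX.mem_closure g)
  rw [← hl]
  exact key l hlX

theorem finite_wordLength_le (hX : IsSymmGen X) (n : ℕ) :
    {g : G | wordLength X g ≤ n}.Finite := by
  have : Finite X := hX.1
  refine ((List.finite_length_le X n).image fun l => (l.map Subtype.val).prod).subset ?_
  intro g hg
  obtain ⟨l, hl, hlX, rfl⟩ := exists_geodesicWord hX.2.1 (hX.mem_closure g)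
  lift l to List X using hlX
  refine ⟨l, ?_, rfl⟩
  rw [List.length_map] at hl
  exact hl.le.trans hg

/-- A geodesic from `1` to `g` passes through every intermediate distance. -/
theorem exists_wordLength_split (hX : IsSymmGen X) (g : G) {k : ℕ}
    (hk : k ≤ wordLength X g) :
    ∃ m : G, wordLength X m = k ∧ wordLength X (m⁻¹ * g) = wordLength X g - k := by
  obtain ⟨l, hl, hlX, hprod⟩ := exists_geodesicWord hX.2.1 (hX.mem_closure g)
  have h1 : wordLength X (l.take k).prod ≤ k :=
    (wordLength_prod_le fun x hx => hlX x (List.mem_of_mem_take hx)).trans (by simp)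
  have h2 : wordLength X (l.drop k).prod ≤ wordLength X g - k :=
    (wordLength_prod_le fun x hx => hlX x (List.mem_of_mem_drop hx)).trans (by simp [hl])
  have hmul : (l.take k).prod * (l.drop k).prod = g := by
    rw [← List.prod_append, List.take_append_drop, hprod]
  have h3 := wordLength_mul_le hX.2.1 (hX.mem_closure (l.take k).prod)
    (hX.mem_closure (l.drop k).prod)
  rw [hmul] at h3
  refine ⟨(l.take k).prod, by omega, ?_⟩
  rw [show (l.take k).prod⁻¹ * g = (l.drop k).prod by rw [← hmul]; group]
  omega

end WordLength

section Hyperbolic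

/-- An isometry that moves two far apart points `p`, `q` by a bounded amount and does not
nearly double the displacement of a point `m` deep inside a geodesic from `p` to `q` moves `m`
by an amount that depends on the hyperbolicity constant only. -/
theorem dist_le_of_fourPoint {α : Type*} {d : α → α → ℝ} {δ A : ℝ} (hδ : 0 ≤ δ)
    (symm : ∀ x y, d x y = d y x) (tri : ∀ x y z, d x z ≤ d x y + d y z)
    (four : ∀ x y z w, d x z + d y w ≤ max (d x y + d z w) (d y z + d x w) + 2 * δ)
    {h : α → α} (iso : ∀ x y, d (h x) (h y) = d x y) {p q m : α}
    (hp : d p (h p) ≤ A) (hq : d q (h q) ≤ A) (hm : d p m + d m q = d p q)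
    (hpm : 4 * A + 4 * δ < d p m) (hmq : 4 * A + 4 * δ < d m q)
    (hdouble : d m (h (h m)) ≤ d m (h m) + 2 * δ + 1) :
    d m (h m) ≤ 16 * δ + 1 := by
  have hA : 0 ≤ A := by
    have h1 := tri p (h p) p
    have h2 := symm (h p) p
    have h3 := tri p p p
    linarith
  have i1 := iso p m
  have i2 := iso m q
  have i3 := iso p q
  have i4 := iso m (h m)
  have i5 := iso p (h m)
  have t1 := tri p (h p) (h m)
  have t2 := tri (h m) (h q) q
  have s2 := symm (h q) q
  have s3 := symm (h m) q
  have near : d m (h m) ≤ A + 2 * δ := by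
    have := four m p (h m) q
    rcases max_cases (d m p + d (h m) q) (d p (h m) + d m q) with ⟨e, _⟩ | ⟨e, _⟩ <;>
      rw [e] at this <;> linarith [symm m p]
  have hy : d p (h m) + d (h m) q ≤ d p q + 4 * δ := by
    have a := four p q (h m) (h p)
    have b := four q (h p) (h m) (h q)
    rcases max_cases (d p q + d (h m) (h p)) (d q (h m) + d p (h p)) with ⟨e, _⟩ | ⟨e, _⟩ <;>
      rcases max_cases (d q (h p) + d (h m) (h q)) (d (h p) (h m) + d q (h q)) with
        ⟨e', _⟩ | ⟨e', _⟩ <;>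
      rw [e] at a <;> rw [e'] at b <;> linarith [symm (h m) (h p)]
  have pos : d m (h m) ≤ |d p (h m) - d p m| + 6 * δ := by
    have := four m p (h m) q
    have a1 := le_abs_self (d p (h m) - d p m)
    have a2 := neg_abs_le (d p (h m) - d p m)
    rcases max_cases (d m p + d (h m) q) (d p (h m) + d m q) with ⟨e, _⟩ | ⟨e, _⟩ <;>
      rw [e] at this <;> linarith [symm m p]
  have t7 := tri p m (h (h m))
  have t8 := tri p (h (h m)) m
  have s9 := symm (h (h m)) m
  have s10 := symm (h (h m)) (h m)
  have shift : |(d p (h (h m)) - d p (h m)) - (d p (h m) - d p m)| ≤ 2 * δ := by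
    have a := four p (h m) (h (h m)) (h p)
    have b := four p (h (h m)) (h m) (h p)
    have s11 := symm (h m) (h p)
    have s12 := symm (h (h m)) (h p)
    have t11 := tri (h p) (h (h m)) (h m)
    rw [abs_le]
    rcases max_cases (d p (h m) + d (h (h m)) (h p)) (d (h m) (h (h m)) + d p (h p)) with
        ⟨e, _⟩ | ⟨e, _⟩ <;>
      rcases max_cases (d p (h (h m)) + d (h m) (h p)) (d (h (h m)) (h m) + d p (h p)) with
        ⟨e', _⟩ | ⟨e', _⟩ <;>
      rw [e] at a <;> rw [e'] at b <;> constructor <;> linarith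
  rw [abs_le] at shift
  rcases abs_cases (d p (h m) - d p m) with ⟨e, _⟩ | ⟨e, _⟩ <;> rw [e] at pos <;> linarith

end Hyperbolic

section WordDist

variable {G : Type u} [Group G] {X : Set G}

theorem wordDist_comm (hX : IsSymmGen X) (x y : G) : wordDist X x y = wordDist X y x := by
  have := wordLength_inv hX.2.1 (hX.mem_closure (x⁻¹ * y))
  simpa [wordDist] using this.symm

theorem wordDist_triangle (hX : IsSymmGen X) (x y z : G) :
    wordDist X x z ≤ wordDist X x y + wordDist X y z := by
  have := wordLength_mul_le hX.2.1 (hX.mem_closure (x⁻¹ * y)) (hX.mem_closure (y⁻¹ * z))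
  simpa [wordDist, mul_assoc] using this

theorem wordDist_mul_left (a x y : G) : wordDist X (a * x) (a * y) = wordDist X x y := by
  simp [wordDist, mul_assoc]

/-- The four-point form of hyperbolicity. -/
theorem wordDist_fourPoint {δ : ℝ}
    (hyp : ∀ x y z w : G,
      gromovProd X x z w ≥ min (gromovProd X x y w) (gromovProd X y z w) - δ) (x y z w : G) :
    (wordDist X x z : ℝ) + wordDist X y w ≤
      max ((wordDist X x y : ℝ) + wordDist X z w) (wordDist X y z + wordDist X x w) + 2 * δ := by
  have h := hyp x y z w
  simp only [gromovProd] at h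
  rcases min_le_iff.mp (sub_le_iff_le_add.mp h) with h | h
  · have := le_max_left ((wordDist X x y : ℝ) + wordDist X z w) (wordDist X y z + wordDist X x w)
    linarith
  · have := le_max_right ((wordDist X x y : ℝ) + wordDist X z w) (wordDist X y z + wordDist X x w)
    linarith

/-- If squaring increases the length of `x` enough, then the powers of `x` grow linearly. -/
theorem le_wordLength_pow (hX : IsSymmGen X) {δ : ℝ} (hδ : 0 ≤ δ)
    (hyp : ∀ x y z w : G,
      gromovProd X x z w ≥ min (gromovProd X x y w) (gromovProd X y z w) - δ) {x : G}
    (hx : (wordLength X x : ℝ) + 2 * δ + 1 ≤ wordLength X (x ^ 2)) (n : ℕ) :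
    n ≤ wordLength X (x ^ n) := by
  have dist_pow : ∀ i j : ℕ, wordDist X (x ^ i) (x ^ (i + j)) = wordLength X (x ^ j) := by
    intro i j
    simp [wordDist, pow_add]
  have step : ∀ n : ℕ, (wordLength X (x ^ n) : ℝ) + 1 ≤ wordLength X (x ^ (n + 1)) := by
    intro n
    induction n with
    | zero =>
      have h := wordLength_mul_le hX.2.1 (hX.mem_closure x) (hX.mem_closure x)
      rw [← sq] at h
      have h' : (wordLength X (x ^ 2) : ℝ) ≤ wordLength X x + wordLength X x := mod_cast h
      simp only [pow_zero, wordLength_one, zero_add, pow_one]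
      push_cast
      linarith
    | succ n ih =>
      have h := wordDist_fourPoint hyp (x ^ 0) (x ^ 1) (x ^ 2) (x ^ (n + 2))
      have e1 := dist_pow 0 2
      have e2 := dist_pow 1 (n + 1)
      have e3 := dist_pow 0 1
      have e4 := dist_pow 2 n
      have e5 := dist_pow 1 1
      have e6 := dist_pow 0 (n + 2)
      rw [show 1 + (n + 1) = n + 2 by ring] at e2
      rw [show 2 + n = n + 2 by ring] at e4
      simp only [zero_add, Nat.reduceAdd] at e1 e3 e5 e6
      rw [e1, e2, e3, e4, e5, e6, pow_one] at h
      rcases le_max_iff.mp (sub_le_iff_le_add.mpr h) with h | h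
      · linarith
      · rw [show n + 1 + 1 = n + 2 by ring]
        linarith
  induction n with
  | zero => simp
  | succ n ih =>
    have : wordLength X (x ^ n) + 1 ≤ wordLength X (x ^ (n + 1)) := mod_cast step n
    omega

/-- An element of infinite order of a hyperbolic group has a power which, up to conjugation,
satisfies the hypothesis of `le_wordLength_pow`. -/
theorem exists_conj_pow_wordLength_sq (hX : IsSymmGen X) {δ : ℝ} (hδ : 0 ≤ δ)
    (hyp : ∀ x y z w : G,
      gromovProd X x z w ≥ min (gromovProd X x y w) (gromovProd X y z w) - δ) {g : G}
    (hg : ¬ IsOfFinOrder g) :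
    ∃ k : ℕ, 0 < k ∧ ∃ t : G,
      (wordLength X (t⁻¹ * g ^ k * t) : ℝ) + 2 * δ + 1 ≤
        wordLength X ((t⁻¹ * g ^ k * t) ^ 2) := by
  by_contra! hcon
  have hinj : Function.Injective fun n : ℕ => g ^ n := injective_pow_iff_not_isOfFinOrder.mpr hg
  obtain ⟨R, hR⟩ := exists_nat_ge (16 * δ + 1)
  set B : Set G := {x : G | wordLength X x ≤ R}
  have hB : B.Finite := finite_wordLength_le hX R
  set M := hB.toFinset.card
  set A := ∑ i ∈ Finset.range (M + 2), wordLength X (g ^ i)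
  have hA : ∀ i < M + 2, wordLength X (g ^ i) ≤ A := fun i hi =>
    Finset.single_le_sum (f := fun i => wordLength X (g ^ i)) (fun _ _ => Nat.zero_le _)
      (Finset.mem_range.mpr hi)
  obtain ⟨S, hS⟩ := exists_nat_gt (4 * (A : ℝ) + 4 * δ)
  obtain ⟨N, hN⟩ : ∃ N : ℕ, 2 * S < wordLength X (g ^ N) := by
    by_contra! hN
    refine Set.infinite_range_of_injective hinj
      ((finite_wordLength_le hX (2 * S)).subset ?_)
    rintro _ ⟨n, rfl⟩
    exact hN n
  obtain ⟨m, hm, hm'⟩ := exists_wordLength_split hX (g ^ N) (k := S) (by omega)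
  have hd : ∀ i < M + 2, 0 < i → m⁻¹ * g ^ i * m ∈ B := by
    intro i hi hi0
    have hpm : wordDist X 1 m = S := by simpa [wordDist] using hm
    have hmq : wordDist X m (g ^ N) = wordLength X (g ^ N) - S := hm'
    have hpq : wordDist X 1 (g ^ N) = wordLength X (g ^ N) := by simp [wordDist]
    have hsq : m⁻¹ * (g ^ i * (g ^ i * m)) = (m⁻¹ * g ^ i * m) ^ 2 := by
      simp [sq, mul_assoc]
    have key := dist_le_of_fourPoint (d := fun x y => (wordDist X x y : ℝ)) (A := A)
      (h := fun x => g ^ i * x) (p := 1) (q := g ^ N) (m := m) hδ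
      (fun x y => by rw [wordDist_comm hX])
      (fun x y z => mod_cast wordDist_triangle hX x y z)
      (wordDist_fourPoint hyp)
      (fun x y => by rw [wordDist_mul_left])
      (by simpa [wordDist] using hA i hi)
      (by
        have : (g ^ N)⁻¹ * (g ^ i * g ^ N) = g ^ i := by
          rw [← pow_add, add_comm, pow_add, inv_mul_cancel_left]
        simpa [wordDist, this] using hA i hi)
      (by
        rw [hpm, hmq, hpq]
        exact_mod_cast (by omega : S + (wordLength X (g ^ N) - S) = wordLength X (g ^ N)))
      (by rw [hpm]; exact hS)
      (by
        rw [hmq]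
        refine hS.trans_le ?_
        exact_mod_cast (by omega : S ≤ wordLength X (g ^ N) - S))
      (by
        have := (hcon i hi0 m).le
        simpa only [wordDist, hsq, mul_assoc] using this)
    have key' : (wordLength X (m⁻¹ * g ^ i * m) : ℝ) ≤ R := by
      refine le_trans ?_ hR
      simpa only [wordDist, mul_assoc] using key
    exact_mod_cast key'
  have hcard : (Finset.range (M + 1)).card ≤ hB.toFinset.card := by
    refine Finset.card_le_card_of_injOn (fun i => m⁻¹ * g ^ (i + 1) * m) ?_ ?_
    · intro i hi
      have hi' : i < M + 1 := by simpa using hi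
      simpa using hd (i + 1) (by omega) (by omega)
    · intro i _ j _ hij
      have : g ^ (i + 1) = g ^ (j + 1) := by simpa using hij
      have := hinj this
      omega
  rw [Finset.card_range] at hcard
  omega

/-- Cyclic subgroups of hyperbolic groups are undistorted. -/
theorem exists_natAbs_le_wordLength_zpow (hX : IsSymmGen X) {δ : ℝ} (hδ : 0 ≤ δ)
    (hyp : ∀ x y z w : G,
      gromovProd X x z w ≥ min (gromovProd X x y w) (gromovProd X y z w) - δ) {g : G}
    (hg : ¬ IsOfFinOrder g) :
    ∃ D : ℕ, ∀ e : ℤ, e.natAbs ≤ D * wordLength X (g ^ e) + D := by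
  obtain ⟨k, hk, t, ht⟩ := exists_conj_pow_wordLength_sq hX hδ hyp hg
  have hmul := fun a b : G => wordLength_mul_le hX.2.1 (hX.mem_closure a) (hX.mem_closure b)
  have hinv := fun a : G => wordLength_inv hX.2.1 (hX.mem_closure a)
  set D := k * (k * wordLength X g + 2 * wordLength X t + 1) with hD
  have key : ∀ e : ℕ, e ≤ D * wordLength X (g ^ e) + D := by
    intro e
    set n := e / k
    set r := e % k
    have he : k * n + r = e := Nat.div_add_mod e k
    have hr : r < k := Nat.mod_lt e hk
    have h1 : n ≤ wordLength X (t⁻¹ * g ^ (k * n) * t) := by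
      have := le_wordLength_pow hX hδ hyp ht n
      have hc : (t⁻¹ * g ^ k * t) ^ n = t⁻¹ * g ^ (k * n) * t := by
        simpa [pow_mul] using conj_pow (i := n) (a := t⁻¹) (b := g ^ k)
      rwa [hc] at this
    have h2 := hmul (t⁻¹ * g ^ (k * n)) t
    have h3 := hmul t⁻¹ (g ^ (k * n))
    have h4 := hmul (g ^ e) (g ^ r)⁻¹
    have h5 : g ^ e * (g ^ r)⁻¹ = g ^ (k * n) := by rw [← he, pow_add, mul_inv_cancel_right]
    have h6 : wordLength X (g ^ r) ≤ k * wordLength X g := by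
      have := wordLength_zpow_le hX.2.1 (hX.mem_closure g) (r : ℤ)
      rw [zpow_natCast, Int.natAbs_natCast] at this
      exact this.trans (Nat.mul_le_mul_right _ hr.le)
    rw [h5, hinv] at h4
    rw [hinv] at h3
    have h7 : n + 1 ≤ wordLength X (g ^ e) + (k * wordLength X g + 2 * wordLength X t + 1) := by
      omega
    have h8 : k ≤ D := Nat.le_mul_of_pos_right k (by omega)
    have h9 := Nat.mul_le_mul_left k h7
    have h10 := Nat.mul_le_mul_right (wordLength X (g ^ e)) h8
    rw [mul_add, mul_add, ← hD] at h9
    omega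
  refine ⟨D, fun e => ?_⟩
  obtain ⟨n, rfl | rfl⟩ := e.eq_nat_or_neg
  · simpa using key n
  · simpa [hinv] using key n

/-- Virtually cyclic subgroups of hyperbolic groups are undistorted. -/
theorem exists_wordLength_le_of_isVirtuallyCyclic (hG : IsWordHyperbolic G) (hX : IsSymmGen X)
    {C : Subgroup G} (hC : IsVirtuallyCyclic C) {Y : Set G} (hYinv : ∀ y ∈ Y, y⁻¹ ∈ Y)
    (hYgen : Subgroup.closure Y = C) :
    ∃ K : ℕ, ∀ c ∈ C, wordLength Y c ≤ K * wordLength X c + K := by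
  obtain ⟨X', hX', δ, hδ, hyp⟩ := hG
  obtain ⟨Z, hZ, hfin⟩ := hC
  obtain ⟨z, hz⟩ := (Subgroup.isCyclic_iff_exists_zpowers_eq_top Z).mp hZ
  have hrep : ∀ c : C, ∃ e : ℤ, c = (c : C ⧸ Z).out * z ^ e := by
    intro c
    have : ((c : C ⧸ Z).out)⁻¹ * c ∈ Z := by
      rw [← QuotientGroup.eq]
      exact Quotient.out_eq' _
    obtain ⟨e, he⟩ := Subgroup.mem_zpowers_iff.mp (hz.ge this)
    exact ⟨e, eq_mul_of_inv_mul_eq he.symm⟩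
  have hfinq : Finite (C ⧸ Z) := Subgroup.finite_quotient_of_finiteIndex
  obtain ⟨BY, hBY⟩ := (Set.finite_range fun q : C ⧸ Z => wordLength Y (q.out : G)).bddAbove
  obtain ⟨BX, hBX⟩ := (Set.finite_range fun q : C ⧸ Z => wordLength X' (q.out : G)).bddAbove
  have hbY : ∀ q : C ⧸ Z, wordLength Y (q.out : G) ≤ BY := fun q => hBY ⟨q, rfl⟩
  have hbX : ∀ q : C ⧸ Z, wordLength X' (q.out : G) ≤ BX := fun q => hBX ⟨q, rfl⟩
  have hmemY : ∀ c : C, (c : G) ∈ Subgroup.closure Y := fun c => hYgen ▸ c.2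
  obtain ⟨E, hE⟩ : ∃ E : ℕ, ∀ c : C, ∃ e : ℤ, c = (c : C ⧸ Z).out * z ^ e ∧
      e.natAbs ≤ E * wordLength X' (z ^ e : G) + E := by
    by_cases hord : IsOfFinOrder (z : G)
    · refine ⟨orderOf (z : G), fun c => ?_⟩
      obtain ⟨e, he⟩ := hrep c
      have hpos : (0 : ℤ) < orderOf (z : G) := mod_cast hord.orderOf_pos
      refine ⟨e % orderOf (z : G), ?_, ?_⟩
      · rw [Subgroup.orderOf_coe, zpow_mod_orderOf]
        exact he
      · have h1 := Int.emod_nonneg e hpos.ne'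
        have h2 := Int.emod_lt_of_pos e hpos
        omega
    · obtain ⟨D, hD⟩ := exists_natAbs_le_wordLength_zpow hX' hδ hyp hord
      refine ⟨D, fun c => ?_⟩
      obtain ⟨e, he⟩ := hrep c
      exact ⟨e, he, hD e⟩
  obtain ⟨K, hK⟩ := exists_wordLength_le_mul hX hX'
  refine ⟨wordLength Y (z : G) * E * K + (BY + wordLength Y (z : G) * E * (BX + 1)),
    fun c hc => ?_⟩
  obtain ⟨e, he, hbound⟩ := hE ⟨c, hc⟩
  set q : C ⧸ Z := ((⟨c, hc⟩ : C) : C ⧸ Z)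
  have hce : c = (q.out : G) * (z : G) ^ e := by
    simpa using congrArg (Subtype.val) he
  have h1 : wordLength Y c ≤ BY + e.natAbs * wordLength Y (z : G) := by
    have a := wordLength_mul_le hYinv (hmemY q.out) (zpow_mem (hmemY z) e)
    have b := wordLength_zpow_le hYinv (hmemY z) e
    have := hbY q
    rw [← hce] at a
    omega
  have h2 : wordLength X' ((z : G) ^ e) ≤ BX + K * wordLength X c := by
    have a := wordLength_mul_le hX'.2.1 (hX'.mem_closure (q.out : G)⁻¹) (hX'.mem_closure c)
    rw [wordLength_inv hX'.2.1 (hX'.mem_closure _)] at a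
    have b : (q.out : G)⁻¹ * c = (z : G) ^ e := by
      conv_lhs => rw [hce]
      simp
    rw [b] at a
    have := hbX q
    have := hK c
    omega
  calc wordLength Y c ≤ BY + e.natAbs * wordLength Y (z : G) := h1
    _ ≤ BY + (E * (BX + K * wordLength X c) + E) * wordLength Y (z : G) := by
        gcongr
        exact hbound.trans (by gcongr)
    _ ≤ _ := by
        refine le_of_le_of_eq (Nat.le_add_right _ ((BY + wordLength Y (z : G) * E * (BX + 1)) *
          wordLength X c + wordLength Y (z : G) * E * K)) ?_
        ring

end WordDist

section Words

variable {G : Type u} [Group G] {X : Set G}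

theorem IsGeodesicWord.subword (hinv : ∀ x ∈ X, x⁻¹ ∈ X) {l v : List G}
    (hl : IsGeodesicWord X l) (hv : v <:+: l) : IsGeodesicWord X v := by
  obtain ⟨a, b, rfl⟩ := hv
  have ha : ∀ x ∈ a, x ∈ X := fun x hx => hl.1 x (by simp [hx])
  have hv : ∀ x ∈ v, x ∈ X := fun x hx => hl.1 x (by simp [hx])
  have hb : ∀ x ∈ b, x ∈ X := fun x hx => hl.1 x (by simp [hx])
  have mem : ∀ {w : List G}, (∀ x ∈ w, x ∈ X) → w.prod ∈ Subgroup.closure X := fun hw =>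
    list_prod_mem fun x hx => Subgroup.subset_closure (hw x hx)
  refine ⟨hv, le_antisymm ?_ (wordLength_prod_le hv)⟩
  have hlen := hl.2
  rw [List.prod_append, List.prod_append, List.length_append, List.length_append] at hlen
  have h1 := wordLength_mul_le hinv (mul_mem (mem ha) (mem hv)) (mem hb)
  have h2 := wordLength_mul_le hinv (mem ha) (mem hv)
  have h3 := wordLength_prod_le ha
  have h4 := wordLength_prod_le hb
  omega

/-- A suffix of a geodesic word that is shortest modulo `C` is itself shortest modulo `C`. -/
theorem wordLength_le_mul_of_suffix (hX : IsSymmGen X) {C : Subgroup G} {U A : List G}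
    (hU : IsGeodesicWord X U) (hmin : ShortestIn X U.prod {x | ∃ c ∈ C, x = U.prod * c})
    (hA : A <:+ U) {c : G} (hc : c ∈ C) : A.length ≤ wordLength X (A.prod * c) := by
  obtain ⟨W, rfl⟩ := hA
  have h1 := hmin.2 _ ⟨c, hc, rfl⟩
  rw [← hU.2, List.prod_append, mul_assoc, List.length_append] at h1
  have h2 := wordLength_mul_le hX.2.1 (hX.mem_closure W.prod) (hX.mem_closure (A.prod * c))
  have h3 : wordLength X W.prod ≤ W.length :=
    wordLength_prod_le fun x hx => hU.1 x (List.mem_append_left _ hx)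
  omega

end Words

/-- **Lemma 2.2(1).** A geodesic ending at a shortest coset representative followed by a
geodesic in the virtually cyclic subgroup is quasigeodesic. -/
theorem coset_geodesic_concat_quasigeodesic {G : Type u} [Group G]
    (hG : IsWordHyperbolic G) (X : Set G) (hX : IsSymmGen X)
    (C₁ : Subgroup G) (hvc : IsVirtuallyCyclic ↥C₁)
    (Y : Set G) (hYX : Y ⊆ X) (hYC : Y ⊆ (C₁ : Set G))
    (hYinv : ∀ y ∈ Y, y⁻¹ ∈ Y) (hYgen : Subgroup.closure Y = C₁) :
    ∃ lam : ℝ, 0 < lam ∧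
      ∀ U V : List G,
        IsGeodesicWord X U →
        ShortestIn X U.prod {x | ∃ c ∈ C₁, x = U.prod * c} →
        IsGeodesicWord Y V →
        IsQuasigeodesicWord X lam (U ++ V) := by
  obtain ⟨K, hK⟩ := exists_wordLength_le_of_isVirtuallyCyclic hG hX hvc hYinv hYgen
  refine ⟨2 * K + 1, by positivity, fun U V hU hUmin hV => ⟨?_, fun v hv => ?_⟩⟩
  · intro x hx
    rcases List.mem_append.mp hx with h | h
    · exact hU.1 x h
    · exact hYX (hV.1 x h)
  have hVsub : ∀ B : List G, B <:+: V →
      B.prod ∈ C₁ ∧ B.length ≤ K * wordLength X B.prod + K := by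
    intro B hB
    have hgeo := hV.subword hYinv hB
    have hmem : B.prod ∈ C₁ := list_prod_mem fun x hx => hYC (hgeo.1 x hx)
    exact ⟨hmem, hgeo.2.trans_le (hK _ hmem)⟩
  suffices h : v.length ≤ (2 * K + 1) * wordLength X v.prod + (2 * K + 1) by exact_mod_cast h
  rcases List.infix_append_iff.mp hv with hv | hv | ⟨A, B, rfl, hA, hB⟩
  · have := (hU.subword hX.2.1 hv).2
    nlinarith
  · have := (hVsub v hv).2
    nlinarith
  · obtain ⟨hBC, hBlen⟩ := hVsub B hB.isInfix
    have h1 := wordLength_le_mul_of_suffix hX hU hUmin hA hBC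
    have h2 := (hU.subword hX.2.1 hA.isInfix).2
    have h3 := wordLength_mul_le hX.2.1 (hX.mem_closure A.prod⁻¹)
      (hX.mem_closure (A.prod * B.prod))
    rw [inv_mul_cancel_left, wordLength_inv hX.2.1 (hX.mem_closure _)] at h3
    have h4 : wordLength X B.prod ≤ 2 * wordLength X (A.prod * B.prod) := by omega
    have h5 := Nat.mul_le_mul_left K h4
    rw [List.length_append, List.prod_append]
    linarith
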